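/- arXiv:1708.08355 — 5 statements merged into one kernel-verified Lean document; each statement's English description precedes it below -/
import Mathlib

section
/- Stealth of coordinated integrity/availability attacks: let H be an m×n real matrix, R a diagonal positive-definite m×m real matrix, d ∈ {0,1}^m, H_d = (I − diag(d))H with H_dᵀR⁻¹H_d invertible, K_d = (H_dᵀR⁻¹H_d)⁻¹H_dᵀR⁻¹, S_d = I − H_dK_d. Let x ∈ ℝ^n, e ∈ ℝ^m, z = Hx + e, and let the attack vectors be a = H_dc for some c ∈ ℝ^n together with d; set the attacked measurement vector z̄ = (I − diag(d))z + a. Then the measurement residual satisfies S_d z̄ = S_d (I − diag(d)) e; in particular the residual does not depend on the attack vectors a, d's integrity component c nor on the true state x. -/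
open Matrix

/-- Stealth of coordinated integrity/availability attacks: with
`a = H_d c` and attacked measurements `z̄ = (I - diag d) z + a`, the residual
`S_d z̄` equals `S_d (I - diag d) e`, independent of `c` and of the true state `x`. -/
theorem stmt_3 (m n : ℕ) (hm : 0 < m) (hn : 0 < n)
    (H : Matrix (Fin m) (Fin n) ℝ) (R : Matrix (Fin m) (Fin m) ℝ)
    (hRdiag : R.IsDiag) (hRpd : R.PosDef)
    (d : Fin m → ℝ) (hd : ∀ i, d i = 0 ∨ d i = 1)
    (Hd : Matrix (Fin m) (Fin n) ℝ)
    (hHd : Hd = (1 - Matrix.diagonal d) * H)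
    (hInv : IsUnit (Hd.transpose * R⁻¹ * Hd))
    (Kd : Matrix (Fin n) (Fin m) ℝ)
    (hKd : Kd = (Hd.transpose * R⁻¹ * Hd)⁻¹ * Hd.transpose * R⁻¹)
    (Sd : Matrix (Fin m) (Fin m) ℝ)
    (hSd : Sd = 1 - Hd * Kd)
    (x : Fin n → ℝ) (e : Fin m → ℝ) (z : Fin m → ℝ)
    (hz : z = H *ᵥ x + e)
    (c : Fin n → ℝ) (a : Fin m → ℝ) (ha : a = Hd *ᵥ c)
    (zbar : Fin m → ℝ)
    (hzbar : zbar = (1 - Matrix.diagonal d) *ᵥ z + a) :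
    Sd *ᵥ zbar = Sd *ᵥ ((1 - Matrix.diagonal d) *ᵥ e) := by
  -- `Kd` is a left inverse of `Hd`, so `Sd` annihilates the column space of `Hd`.
  have hKH : Kd * Hd = 1 := by
    rw [hKd, Matrix.mul_assoc, Matrix.mul_assoc, ← Matrix.mul_assoc Hd.transpose]
    exact Matrix.nonsing_inv_mul _ ((Matrix.isUnit_iff_isUnit_det _).mp hInv)
  have hSH : Sd * Hd = 0 := by
    rw [hSd, Matrix.sub_mul, Matrix.mul_assoc, hKH, Matrix.one_mul, Matrix.mul_one, sub_self]
  -- The state and the integrity attack enter `zbar` only through `Hd *ᵥ x` and `Hd *ᵥ c`.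
  rw [hzbar, hz, ha, Matrix.mulVec_add (1 - diagonal d), Matrix.mulVec_mulVec x, ← hHd, Matrix.mulVec_add,
    Matrix.mulVec_add, Matrix.mulVec_mulVec x, Matrix.mulVec_mulVec c, hSH,
    Matrix.zero_mulVec, Matrix.zero_mulVec, zero_add, add_zero]
end

section
/- Attack-induced estimate bias: let H be an m×n real matrix, R a diagonal positive-definite m×m real matrix, d ∈ {0,1}^m, H_d = (I − diag(d))H with H_dᵀR⁻¹H_d invertible, and K_d = (H_dᵀR⁻¹H_d)⁻¹H_dᵀR⁻¹. Let x ∈ ℝ^n, e ∈ ℝ^m, z = Hx + e, c ∈ ℝ^n, a = H_dc, and z̄ = (I − diag(d))z + a. Then the weighted least-squares state estimate under attack satisfies K_d z̄ = x + c + K_d e_d, where e_d = (I − diag(d))e; that is, the stealth attack biases the state estimate by exactly c. -/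
open Matrix

/-- Attack-induced estimate bias: under the stealth attack `a = H_d c`,
the WLS estimate satisfies `K_d z̄ = x + c + K_d e_d` with `e_d = (I - diag d) e`;
the attack biases the state estimate by exactly `c`. -/
theorem stmt_4 (m n : ℕ) (hm : 0 < m) (hn : 0 < n)
    (H : Matrix (Fin m) (Fin n) ℝ) (R : Matrix (Fin m) (Fin m) ℝ)
    (hRdiag : R.IsDiag) (hRpd : R.PosDef)
    (d : Fin m → ℝ) (hd : ∀ i, d i = 0 ∨ d i = 1)
    (Hd : Matrix (Fin m) (Fin n) ℝ)
    (hHd : Hd = (1 - Matrix.diagonal d) * H)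
    (hInv : IsUnit (Hd.transpose * R⁻¹ * Hd))
    (Kd : Matrix (Fin n) (Fin m) ℝ)
    (hKd : Kd = (Hd.transpose * R⁻¹ * Hd)⁻¹ * Hd.transpose * R⁻¹)
    (x : Fin n → ℝ) (e : Fin m → ℝ) (z : Fin m → ℝ)
    (hz : z = H *ᵥ x + e)
    (c : Fin n → ℝ) (a : Fin m → ℝ) (ha : a = Hd *ᵥ c)
    (zbar : Fin m → ℝ)
    (hzbar : zbar = (1 - Matrix.diagonal d) *ᵥ z + a)
    (ed : Fin m → ℝ) (hed : ed = (1 - Matrix.diagonal d) *ᵥ e) :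
    Kd *ᵥ zbar = x + c + Kd *ᵥ ed := by
  -- `K_d` is a left inverse of `H_d`, and the attacked measurement is `H_d (x + c) + e_d`.
  have hKH : Kd * Hd = 1 := by
    rw [hKd, Matrix.mul_assoc, Matrix.mul_assoc, ← Matrix.mul_assoc Hd.transpose]
    exact Matrix.nonsing_inv_mul _ ((Matrix.isUnit_iff_isUnit_det _).mp hInv)
  have hz' : zbar = Hd *ᵥ (x + c) + ed := by
    rw [hzbar, hz, ha, hed, Matrix.mulVec_add, Matrix.mulVec_add, Matrix.mulVec_mulVec, ← hHd]
    abel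
  rw [hz', Matrix.mulVec_add, Matrix.mulVec_mulVec, hKH, Matrix.one_mulVec]
end

section
/- Embedding of the attack-resource problem into the big-M program: let H be an m×n real matrix, j an index, μ ≠ 0, and let (c, d) with d ∈ {0,1}^m satisfy a = (I − diag(d))Hc and a(j) = μ. Define w ∈ {0,1}^m by w(i) = 1 iff a(i) ≠ 0. If M ≥ max_i |(Hc)(i)| then (c, w, d) is feasible for the big-M program, i.e. Hc ≤ M(w + d), −Hc ≤ M(w + d) componentwise and (Hc)(j) = μ, and its objective Σ_i w(i) + Σ_k d(k) equals ‖a‖₀ + ‖d‖₀. -/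
/-!
Coordinatewise, `a i = (1 - d i) * (Hc)(i)`. A protected row (`d i = 1`) has `a i = 0`, and an
unprotected row has `a i = (Hc)(i)`. Hence `w i + d i = 1` wherever `(Hc)(i) ≠ 0`, which gives
the big-M inequalities; and `μ ≠ 0` forces row `j` to be unprotected. The objectives agree
because `w` and `d` are the indicator vectors of the supports of `a` and `d`.
-/

open Matrix

/-- Embedding of the attack-resource problem into the big-M program:
given `a = (I - diag d) H c` with `a j = μ ≠ 0`, the indicator vector `w` of the
support of `a` makes `(c, w, d)` feasible for the big-M program whenever
`M ≥ max_i |(Hc)(i)|`, with objective `Σ w + Σ d = ‖a‖₀ + ‖d‖₀`. -/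
theorem stmt_11 (m n : ℕ) (hm : 0 < m) (hn : 0 < n)
    (H : Matrix (Fin m) (Fin n) ℝ) (j : Fin m) (μ : ℝ) (hμ : μ ≠ 0) (M : ℝ)
    (c : Fin n → ℝ) (d w : Fin m → ℝ)
    (hd : ∀ i, d i = 0 ∨ d i = 1)
    (a : Fin m → ℝ) (ha : a = (1 - Matrix.diagonal d) *ᵥ (H *ᵥ c))
    (haj : a j = μ)
    (hw : ∀ i, w i = if a i ≠ 0 then 1 else 0)
    (hMbound : ∀ i, |(H *ᵥ c) i| ≤ M) :
    (∀ i, (H *ᵥ c) i ≤ M * (w i + d i)) ∧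
      (∀ i, -((H *ᵥ c) i) ≤ M * (w i + d i)) ∧
      (H *ᵥ c) j = μ ∧
      (∑ i, w i) + (∑ k, d k) =
        ((Finset.univ.filter fun i => a i ≠ 0).card : ℝ) +
          ((Finset.univ.filter fun i => d i ≠ 0).card : ℝ) := by
  have hai : ∀ i, a i = (1 - d i) * (H *ᵥ c) i := fun i => by
    rw [ha, Matrix.sub_mulVec, Matrix.one_mulVec, Pi.sub_apply, Matrix.mulVec_diagonal]
    ring
  -- In each row exactly one of three cases holds: `d i = 1` and `w i = 0`; `d i = 0` and
  -- `w i = 1`; or `w i = d i = 0`, where `(Hc)(i) = a i = 0`. So `w i + d i` is 1 unless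
  -- `(Hc)(i) = 0`, and the bound by `M` suffices.
  have key : ∀ i, |(H *ᵥ c) i| ≤ M * (w i + d i) := fun i => by
    have hM := hMbound i
    have h := hai i
    rcases hd i with h0 | h1
    · have hac : a i = (H *ᵥ c) i := by rw [h, h0]; ring
      by_cases hz : a i = 0
      · simp [hw i, h0, hz, ← hac]
      · simpa [hw i, h0, hz] using hM
    · have hz : a i = 0 := by rw [h, h1]; ring
      simpa [hw i, h1, hz] using hM
  refine ⟨fun i => (le_abs_self _).trans (key i), fun i => (neg_le_abs _).trans (key i), ?_, ?_⟩
  · have h := hai j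
    rcases hd j with h0 | h1
    · rw [← haj, h, h0]; ring
    · -- a protected row would give `a j = 0`, contradicting `μ ≠ 0`
      exact absurd (by rw [← haj, h, h1]; ring) hμ
  · have hdi : ∀ k, d k = if d k ≠ 0 then 1 else 0 := fun k => by
      rcases hd k with h | h <;> simp [h]
    rw [Finset.sum_congr rfl fun i _ => hw i, Finset.sum_congr rfl fun k _ => hdi k,
      Finset.sum_boole, Finset.sum_boole]
end

section
/- Extraction of a feasible attack from the big-M program: let H be an m×n real matrix, j an index, μ ≠ 0, M > 0, and let (c, w, d) with w, d ∈ {0,1}^m satisfy Hc ≤ M(w + d), −Hc ≤ M(w + d) componentwise and (Hc)(j) = μ, and additionally d(j) = 0. Then the pair (c, d) with a = (I − diag(d))Hc is feasible for the attack-resource problem, i.e. a(j) = μ, and ‖a‖₀ + ‖d‖₀ ≤ Σ_i w(i) + Σ_k d(k). -/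
open Matrix

/-!
Entrywise, `a i = (1 - d i) * (H c) i`, which at `j` is `μ` because `d j = 0`. The cost bound is
compared term by term after writing each count as a sum of indicators: `d i` is its own
indicator, and `a i ≠ 0` forces `d i = 0` and `(H c) i ≠ 0`, hence `w i = 1` by the two
big-M inequalities.
-/

/-- Extraction of a feasible attack from the big-M program:
if `(c, w, d)` is feasible for the big-M program (with `(Hc)(j) = μ ≠ 0` and
`d j = 0`), then `a = (I - diag d) H c` satisfies `a j = μ` and
`‖a‖₀ + ‖d‖₀ ≤ Σ w + Σ d`. -/
theorem stmt_12 (m n : ℕ) (hm : 0 < m) (hn : 0 < n)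
    (H : Matrix (Fin m) (Fin n) ℝ) (j : Fin m) (μ : ℝ) (hμ : μ ≠ 0)
    (M : ℝ) (hM : 0 < M)
    (c : Fin n → ℝ) (w d : Fin m → ℝ)
    (hw : ∀ i, w i = 0 ∨ w i = 1) (hd : ∀ i, d i = 0 ∨ d i = 1)
    (h1 : ∀ i, (H *ᵥ c) i ≤ M * (w i + d i))
    (h2 : ∀ i, -((H *ᵥ c) i) ≤ M * (w i + d i))
    (hj : (H *ᵥ c) j = μ) (hdj : d j = 0)
    (a : Fin m → ℝ) (ha : a = (1 - Matrix.diagonal d) *ᵥ (H *ᵥ c)) :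
    a j = μ ∧
      ((Finset.univ.filter fun i => a i ≠ 0).card : ℝ) +
          ((Finset.univ.filter fun i => d i ≠ 0).card : ℝ) ≤
        (∑ i, w i) + (∑ k, d k) := by
  have ha' : ∀ i, a i = (1 - d i) * (H *ᵥ c) i := by
    intro i
    rw [ha, Matrix.sub_mulVec, Matrix.one_mulVec, Pi.sub_apply, Matrix.mulVec_diagonal]
    ring
  refine ⟨by rw [ha', hdj, hj]; ring, ?_⟩
  rw [Finset.card_filter, Finset.card_filter]
  push_cast
  apply add_le_add <;> refine Finset.sum_le_sum fun i _ => ?_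
  · split_ifs with hi
    · rcases hw i with h | h
      · -- With `w i = 0`, either `d i = 1` masks the entry or the big-M bounds force it to vanish.
        refine absurd ?_ hi
        rw [ha']
        rcases hd i with h' | h'
        · have l := h1 i
          have r := h2 i
          rw [h, h'] at l r
          have : (H *ᵥ c) i = 0 := by linarith
          rw [this, mul_zero]
        · rw [h', sub_self, zero_mul]
      · exact h.ge
    · rcases hw i with h | h <;> simp [h]
  · rcases hd i with h | h <;> simp [h]
end

section
/- Theorem 1 (equivalence of the big-M program and the optimal attack-resource problem): let H be an m×n real matrix, j an index, μ ≠ 0, and M > 0. Suppose there exists an optimal solution (c₀, d₀) of problem (11) — minimizing ‖H_{d₀}c₀‖₀ + ‖d₀‖₀ over pairs (c, d), d ∈ {0,1}^m, subject to the FDI vector a = (I − diag(d))Hc satisfying a(j) = μ — such that max_i |(Hc₀)(i)| ≤ M. Then for every optimal solution (c*, w*, d*) of the big-M program (12) — minimizing Σ_i w(i) + Σ_k d(k) over (c, w, d) with w, d ∈ {0,1}^m subject to Hc ≤ M(w+d), −Hc ≤ M(w+d) componentwise, (Hc)(j) = μ, and d(j) = 0 — the pair (c*, d*) is an optimal solution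 of problem (11), and the two optimal values coincide. -/
/-!
The two programs are compared through two maps between their feasible sets.
A big-M feasible `(c, w, d)` projects to a feasible pair `(c, d)` of the ℓ₀ problem, and the objective does
not increase: where `a i ≠ 0`, necessarily `d i = 0` and `(H c) i ≠ 0`, so the big-M constraints
force `w i = 1` (`Feas12.feas11`, `Feas12.obj11_le`). Conversely, a feasible pair of the ℓ₀ problem with
`|H c| ≤ M` lifts to a big-M feasible point of the same objective, by taking `w` to be the indicator
of the support of `a` (`Feas11.feas12_support`, `obj12_support`). Hence
`Obj11 (c*, d*) ≤ Obj12 (w*, d*) ≤ Obj12 (lift of (c₀, d₀)) = Obj11 (c₀, d₀) ≤ Obj11 (c*, d*)`,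
and equality holds throughout.
-/

open Matrix

/-- The FDI attack vector `a = H_d c = (I - diag d) H c`. -/
noncomputable def fdiVec {m n : ℕ} (H : Matrix (Fin m) (Fin n) ℝ)
    (c : Fin n → ℝ) (d : Fin m → ℝ) : Fin m → ℝ :=
  (1 - Matrix.diagonal d) *ᵥ (H *ᵥ c)

/-- The ℓ₀ "norm": number of nonzero entries of a vector. -/
noncomputable def zeroNorm {m : ℕ} (v : Fin m → ℝ) : ℕ :=
  (Finset.univ.filter fun i => v i ≠ 0).card

/-- Feasibility for problem (11): `d ∈ {0,1}^m` and the FDI attack vector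
`a = (I - diag d) H c` has `a j = μ`. -/
def Feas11 {m n : ℕ} (H : Matrix (Fin m) (Fin n) ℝ) (j : Fin m) (μ : ℝ)
    (c : Fin n → ℝ) (d : Fin m → ℝ) : Prop :=
  (∀ i, d i = 0 ∨ d i = 1) ∧ fdiVec H c d j = μ

/-- Objective of problem (11): `‖a‖₀ + ‖d‖₀`. -/
noncomputable def Obj11 {m n : ℕ} (H : Matrix (Fin m) (Fin n) ℝ)
    (c : Fin n → ℝ) (d : Fin m → ℝ) : ℕ :=
  zeroNorm (fdiVec H c d) + zeroNorm d

/-- Feasibility for the big-M program (12). -/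
def Feas12 {m n : ℕ} (H : Matrix (Fin m) (Fin n) ℝ) (j : Fin m) (μ M : ℝ)
    (c : Fin n → ℝ) (w d : Fin m → ℝ) : Prop :=
  (∀ i, w i = 0 ∨ w i = 1) ∧ (∀ i, d i = 0 ∨ d i = 1) ∧
    (∀ i, (H *ᵥ c) i ≤ M * (w i + d i)) ∧
    (∀ i, -((H *ᵥ c) i) ≤ M * (w i + d i)) ∧
    (H *ᵥ c) j = μ ∧ d j = 0

/-- Objective of the big-M program (12): `Σᵢ w i + Σₖ d k`. -/
def Obj12 {m : ℕ} (w d : Fin m → ℝ) : ℝ :=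
  (∑ i, w i) + (∑ k, d k)

lemma fdiVec_apply {m n : ℕ} (H : Matrix (Fin m) (Fin n) ℝ) (c : Fin n → ℝ) (d : Fin m → ℝ)
    (i : Fin m) : fdiVec H c d i = (1 - d i) * (H *ᵥ c) i := by
  rw [fdiVec, Matrix.sub_mulVec, Matrix.one_mulVec, Pi.sub_apply, Matrix.mulVec_diagonal]
  ring

lemma zeroNorm_cast {m : ℕ} (v : Fin m → ℝ) :
    (zeroNorm v : ℝ) = ∑ i, if v i ≠ 0 then (1 : ℝ) else 0 := by
  simp only [zeroNorm, Finset.sum_boole]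

lemma zeroNorm_of_binary {m : ℕ} {v : Fin m → ℝ} (hv : ∀ i, v i = 0 ∨ v i = 1) :
    (zeroNorm v : ℝ) = ∑ i, v i := by
  rw [zeroNorm_cast]
  refine Finset.sum_congr rfl fun i _ => ?_
  rcases hv i with h | h <;> simp [h]

/-- The indicator of the support of the attack vector, used as the `w`-part of the lift. -/
noncomputable def supportVec {m n : ℕ} (H : Matrix (Fin m) (Fin n) ℝ) (c : Fin n → ℝ)
    (d : Fin m → ℝ) : Fin m → ℝ :=
  fun i => if fdiVec H c d i ≠ 0 then 1 else 0

section

variable {m n : ℕ} {H : Matrix (Fin m) (Fin n) ℝ} {j : Fin m} {μ M : ℝ}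
  {c : Fin n → ℝ} {w d : Fin m → ℝ}

lemma Feas12.feas11 (h : Feas12 H j μ M c w d) : Feas11 H j μ c d := by
  obtain ⟨-, hd, -, -, hj, hdj⟩ := h
  exact ⟨hd, by simp [fdiVec_apply, hj, hdj]⟩

lemma Feas12.obj11_le (h : Feas12 H j μ M c w d) : (Obj11 H c d : ℝ) ≤ Obj12 w d := by
  obtain ⟨hw, hd, h1, h2, -, -⟩ := h
  rw [Obj11, Obj12, Nat.cast_add, zeroNorm_of_binary hd, zeroNorm_cast]
  gcongr with i
  rcases hw i with hwi | hwi
  · -- The big-M constraints give `(H c) i = 0` unless `d i = 1`; either way `a i = 0`.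
    have ha : fdiVec H c d i = 0 := by
      rw [fdiVec_apply]
      rcases hd i with hdi | hdi
      · have h1i := h1 i
        have h2i := h2 i
        simp only [hwi, hdi, add_zero, mul_zero] at h1i h2i
        have : (H *ᵥ c) i = 0 := by linarith
        simp [this]
      · simp [hdi]
    simp [ha, hwi]
  · rw [hwi]
    split_ifs <;> norm_num

lemma Feas11.feas12_support (hμ : μ ≠ 0) (h : Feas11 H j μ c d)
    (hb : ∀ i, |(H *ᵥ c) i| ≤ M) : Feas12 H j μ M c (supportVec H c d) d := by
  obtain ⟨hd, hj⟩ := h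
  -- `d j = 1` would make `a j = 0`.
  have hdj : d j = 0 := by
    rcases hd j with h0 | h1
    · exact h0
    · exact absurd (by rw [← hj, fdiVec_apply, h1]; simp) hμ
  have hbound : ∀ i, |(H *ᵥ c) i| ≤ M * (supportVec H c d i + d i) := by
    intro i
    rcases hd i with hdi | hdi
    · by_cases h0 : (H *ᵥ c) i = 0
      · simp [supportVec, fdiVec_apply, hdi, h0]
      · simpa [supportVec, fdiVec_apply, hdi, h0] using hb i
    · simpa [supportVec, fdiVec_apply, hdi] using hb i
  refine ⟨fun i => ?_, hd, fun i => (le_abs_self _).trans (hbound i),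
    fun i => (neg_le_abs _).trans (hbound i), ?_, hdj⟩
  · by_cases h0 : fdiVec H c d i = 0 <;> simp [supportVec, h0]
  · rw [← hj, fdiVec_apply, hdj]; simp

lemma obj12_support (hd : ∀ i, d i = 0 ∨ d i = 1) :
    Obj12 (supportVec H c d) d = (Obj11 H c d : ℝ) := by
  rw [Obj11, Obj12, Nat.cast_add, zeroNorm_of_binary hd, zeroNorm_cast]
  rfl

end

/-- **Theorem 1.** If problem (11) has an optimal solution `(c₀, d₀)`
with `max_i |(Hc₀)(i)| ≤ M`, then for every optimal solution `(c*, w*, d*)` of the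
big-M program (12), the pair `(c*, d*)` is an optimal solution of problem (11), and
the two optimal values coincide. -/
theorem stmt_13 (m n : ℕ) (hm : 0 < m) (hn : 0 < n)
    (H : Matrix (Fin m) (Fin n) ℝ) (j : Fin m) (μ M : ℝ) (hμ : μ ≠ 0) (hM : 0 < M)
    (c₀ : Fin n → ℝ) (d₀ : Fin m → ℝ)
    (h₀feas : Feas11 H j μ c₀ d₀)
    (h₀opt : ∀ c d, Feas11 H j μ c d → Obj11 H c₀ d₀ ≤ Obj11 H c d)
    (h₀M : ∀ i, |(H *ᵥ c₀) i| ≤ M)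
    (cs : Fin n → ℝ) (ws ds : Fin m → ℝ)
    (hsfeas : Feas12 H j μ M cs ws ds)
    (hsopt : ∀ c w d, Feas12 H j μ M c w d → Obj12 ws ds ≤ Obj12 w d) :
    Feas11 H j μ cs ds ∧
      (∀ c d, Feas11 H j μ c d → Obj11 H cs ds ≤ Obj11 H c d) ∧
      Obj12 ws ds = (Obj11 H cs ds : ℝ) := by
  have hs := hsfeas.feas11
  have h1 := hsfeas.obj11_le
  have h2 := hsopt _ _ _ (h₀feas.feas12_support hμ h₀M)
  rw [obj12_support h₀feas.1] at h2
  refine ⟨hs, fun c d h => ?_, le_antisymm (h2.trans ?_) h1⟩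
  · exact le_trans (by exact_mod_cast h1.trans h2) (h₀opt c d h)
  · exact_mod_cast h₀opt cs ds hs
end
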